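/- arXiv:math/0404468 — 3 statements merged into one kernel-verified Lean document; each statement's English description precedes it below -/
import Mathlib

section
/- Let Γ be a finite abelian group, and let S ⊆ Γ be closed under inversion. For a finite multigraph G with a fixed orientation of its edges, let f(G) be the number of S-flows of G. Let Γ* be the character group of Γ, and let H be the weighted graph on vertex set Γ* with node weights α_χ = 1/|Γ| for every χ ∈ Γ* and edge weights β_{χ,χ'} = Σ_{s∈S} χ(s)^{-1} χ'(s). Then β is real and symmetric, and f(G) = hom(G,H) for every finite multigraph G. -/
/-- A finite multigraph with a fixed orientation of its edges (parallel edges allowed,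
no loops): each edge has a source and a target. -/
structure OrientedMultigraph where
  n : ℕ
  m : ℕ
  src : Fin m → Fin n
  tgt : Fin m → Fin n
  noLoops : ∀ e, src e ≠ tgt e

/-- An `S`-flow of an oriented multigraph `G`: an assignment of an element of `S` to each
edge such that at every vertex the product of the values on entering edges equals the
product of the values on leaving edges. -/
def IsFlow (Γ : Type) [CommGroup Γ] (S : Finset Γ) (G : OrientedMultigraph)
    (φ : Fin G.m → Γ) : Prop :=
  (∀ e, φ e ∈ S) ∧
  ∀ v : Fin G.n,
    (∏ e ∈ Finset.univ.filter (fun e => G.tgt e = v), φ e) =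
    (∏ e ∈ Finset.univ.filter (fun e => G.src e = v), φ e)

/-- The number of `S`-flows of `G`. -/
noncomputable def flowCount (Γ : Type) [CommGroup Γ] (S : Finset Γ)
    (G : OrientedMultigraph) : ℕ :=
  Set.ncard {φ : Fin G.m → Γ | IsFlow Γ S G φ}

/-- The edge weight `β_{χ,χ'} = ∑_{s ∈ S} χ(s)⁻¹ χ'(s)` of the target graph, a priori a
complex number. -/
noncomputable def charWeight (Γ : Type) [CommGroup Γ] (S : Finset Γ) (χ χ' : Γ →* ℂˣ) : ℂ :=
  ∑ s ∈ S, (((χ s)⁻¹ * χ' s : ℂˣ) : ℂ)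

/-- The homomorphism function `hom(G, H)` for the weighted graph `H` on the character
group `Γ* = Hom(Γ, ℂˣ)`, with all node weights `1/|Γ|` and edge weights `β_{χ,χ'}`. -/
noncomputable def homFlowTarget (Γ : Type) [CommGroup Γ] [Fintype Γ]
    [Fintype (Γ →* ℂˣ)] (S : Finset Γ) (G : OrientedMultigraph) : ℂ :=
  ∑ ψ : Fin G.n → (Γ →* ℂˣ),
    (∏ _v : Fin G.n, (1 / (Fintype.card Γ : ℂ))) *
    ∏ e : Fin G.m, charWeight Γ S (ψ (G.src e)) (ψ (G.tgt e))

/-!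
Summing `χ a` over all characters `χ` of `Γ` gives `|Γ|` if `a = 1` and `0` otherwise. Expanding
`∏ e, β (ψ (src e)) (ψ (tgt e))` gives a sum over all `φ : E → S` in which the term of `φ` regroups,
vertex by vertex, as `∏ v, ψ v (net inflow of φ at v)`. Summing over `ψ` first therefore detects
exactly the flows. Since character values are roots of unity, `β` is Hermitian for every `S`;
if `S` is closed under inversion then `β` is also symmetric, hence real.
-/

theorem conj_unit_of_isOfFinOrder {u : ℂˣ} (hu : IsOfFinOrder u) :
    starRingEnd ℂ u = (u⁻¹ : ℂˣ) := by
  have norm_u : ‖(u : ℂ)‖ = 1 := ((Units.coeHom ℂ).isOfFinOrder hu).norm_eq_one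
  rw [Units.val_inv_eq_inv_val, Complex.inv_eq_conj norm_u]

section Characters

variable {Γ R : Type*} [CommGroup Γ] [Finite Γ] [CommRing R] [IsDomain R]
  [HasEnoughRootsOfUnity R (Monoid.exponent Γ)] [Fintype (Γ →* Rˣ)]

theorem sum_monoidHom_apply_eq_ite [DecidableEq Γ] (a : Γ) :
    ∑ χ : Γ →* Rˣ, (χ a : R) = if a = 1 then (Nat.card Γ : R) else 0 := by
  classical
  let evalAt : (Γ →* Rˣ) →* R := (Units.coeHom R).comp (MonoidHom.eval a)
  have evalAt_eq_one : evalAt = 1 ↔ a = 1 := by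
    rw [← CommGroup.forall_apply_eq_apply_iff Γ (M := R)]
    simp [evalAt, MonoidHom.ext_iff]
  have card_dual : Fintype.card (Γ →* Rˣ) = Nat.card Γ := by
    rw [← Nat.card_eq_fintype_card, CommGroup.card_monoidHom_of_hasEnoughRootsOfUnity]
  calc ∑ χ : Γ →* Rˣ, (χ a : R)
      = if evalAt = 1 then (Fintype.card (Γ →* Rˣ) : R) else 0 := by
        exact_mod_cast sum_hom_units evalAt
    _ = if a = 1 then (Nat.card Γ : R) else 0 := by simp only [evalAt_eq_one, card_dual]

theorem sum_prod_monoidHom_apply_eq_ite {V : Type*} [Fintype V] [DecidableEq V] [DecidableEq Γ]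
    (a : V → Γ) :
    ∑ ψ : V → Γ →* Rˣ, ∏ v, (ψ v (a v) : R) =
      if ∀ v, a v = 1 then (Nat.card Γ : R) ^ Fintype.card V else 0 := by
  calc ∑ ψ : V → Γ →* Rˣ, ∏ v, (ψ v (a v) : R)
      = ∏ v, ∑ χ : Γ →* Rˣ, (χ (a v) : R) := by
        rw [Finset.prod_univ_sum, Fintype.piFinset_univ]
    _ = _ := by
        simp only [sum_monoidHom_apply_eq_ite, Finset.prod_ite_zero, Finset.mem_univ,
          true_imp_iff, Finset.prod_const, Finset.card_univ]

end Characters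

section Flows

variable {Γ V E : Type*} [CommGroup Γ] [Fintype E] [DecidableEq V]

/-- The net inflow of `φ` at the vertex `v` of the directed multigraph with edge set `E` and
endpoint maps `src` and `tgt`: the product of the values entering `v` divided by the product of
those leaving it, so that `φ` is conserved at `v` when this is `1`. -/
def netInflow (src tgt : E → V) (φ : E → Γ) (v : V) : Γ :=
  (∏ e with tgt e = v, φ e) / ∏ e with src e = v, φ e

variable [Fintype V]

theorem prod_map_prod_fiber {N M : Type*} [CommMonoid N] [CommMonoid M] (f : E → V)
    (ψ : V → N →* M) (φ : E → N) :
    ∏ v, ψ v (∏ e with f e = v, φ e) = ∏ e, ψ (f e) (φ e) := by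
  rw [← Finset.prod_fiberwise Finset.univ f]
  refine Finset.prod_congr rfl fun v _ ↦ ?_
  rw [map_prod]
  exact Finset.prod_congr rfl fun e he ↦ by rw [(Finset.mem_filter.1 he).2]

theorem prod_inv_src_mul_tgt_eq_prod_netInflow {M : Type*} [CommGroup M] (src tgt : E → V)
    (ψ : V → Γ →* M) (φ : E → Γ) :
    ∏ e, ((ψ (src e) (φ e))⁻¹ * ψ (tgt e) (φ e)) = ∏ v, ψ v (netInflow src tgt φ v) := by
  simp only [netInflow, map_div, Finset.prod_div_distrib, prod_map_prod_fiber, inv_mul_eq_div]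

theorem sum_prod_edge_weights_eq_mul_ncard {R : Type*} [CommRing R] [IsDomain R] [Finite Γ]
    [HasEnoughRootsOfUnity R (Monoid.exponent Γ)] [Fintype (Γ →* Rˣ)]
    (src tgt : E → V) (S : E → Finset Γ) :
    ∑ ψ : V → Γ →* Rˣ, ∏ e, ∑ s ∈ S e, (((ψ (src e) s)⁻¹ * ψ (tgt e) s : Rˣ) : R) =
      (Nat.card Γ : R) ^ Fintype.card V *
        ({φ | (∀ e, φ e ∈ S e) ∧ ∀ v, netInflow src tgt φ v = 1}.ncard : R) := by
  classical
  calc ∑ ψ : V → Γ →* Rˣ, ∏ e, ∑ s ∈ S e, (((ψ (src e) s)⁻¹ * ψ (tgt e) s : Rˣ) : R)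
      = ∑ φ ∈ Fintype.piFinset S, ∑ ψ : V → Γ →* Rˣ,
          ∏ e, (((ψ (src e) (φ e))⁻¹ * ψ (tgt e) (φ e) : Rˣ) : R) := by
        simp only [Finset.prod_univ_sum]
        exact Finset.sum_comm
    _ = ∑ φ ∈ Fintype.piFinset S, ∑ ψ : V → Γ →* Rˣ,
          ∏ v, (ψ v (netInflow src tgt φ v) : R) := by
        simp only [← Units.coe_prod, prod_inv_src_mul_tgt_eq_prod_netInflow]
    _ = ∑ φ ∈ Fintype.piFinset S,
          if ∀ v, netInflow src tgt φ v = 1 then (Nat.card Γ : R) ^ Fintype.card V else 0 := by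
        simp only [sum_prod_monoidHom_apply_eq_ite]
    _ = _ := by
        rw [← Finset.sum_filter, Finset.sum_const, nsmul_eq_mul, mul_comm,
          ← Set.ncard_coe_finset, Finset.coe_filter]
        simp only [Fintype.mem_piFinset]

end Flows

section FlowCount

variable {Γ : Type} [CommGroup Γ] {S : Finset Γ}

theorem charWeight_comm (hS : ∀ s ∈ S, s⁻¹ ∈ S) (χ χ' : Γ →* ℂˣ) :
    charWeight Γ S χ χ' = charWeight Γ S χ' χ :=
  Finset.sum_bij' (fun s _ ↦ s⁻¹) (fun s _ ↦ s⁻¹) hS hS (by simp) (by simp)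
    fun s _ ↦ by simp [mul_comm]

theorem conj_charWeight (hS : ∀ s ∈ S, IsOfFinOrder s) (χ χ' : Γ →* ℂˣ) :
    starRingEnd ℂ (charWeight Γ S χ χ') = charWeight Γ S χ' χ := by
  rw [charWeight, map_sum]
  refine Finset.sum_congr rfl fun s hs ↦ ?_
  have finOrder : IsOfFinOrder ((χ s)⁻¹ * χ' s) := (χ⁻¹ * χ').isOfFinOrder (hS s hs)
  rw [conj_unit_of_isOfFinOrder finOrder, mul_inv_rev, inv_inv]

theorem isFlow_iff_netInflow_eq_one {G : OrientedMultigraph} {φ : Fin G.m → Γ} :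
    IsFlow Γ S G φ ↔ (∀ e, φ e ∈ S) ∧ ∀ v, netInflow G.src G.tgt φ v = 1 := by
  simp only [IsFlow, netInflow, div_eq_one]

theorem flowCount_eq_hom_general [Fintype Γ] [Fintype (Γ →* ℂˣ)] (S : Finset Γ)
    (G : OrientedMultigraph) : (flowCount Γ S G : ℂ) = homFlowTarget Γ S G := by
  have card_ne_zero : (Fintype.card Γ : ℂ) ≠ 0 := Nat.cast_ne_zero.2 Fintype.card_ne_zero
  have expansion := sum_prod_edge_weights_eq_mul_ncard (R := ℂ) G.src G.tgt fun _ ↦ S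
  simp only [Nat.card_eq_fintype_card, Fintype.card_fin, ← isFlow_iff_netInflow_eq_one]
    at expansion
  calc (flowCount Γ S G : ℂ)
      = (1 / (Fintype.card Γ : ℂ)) ^ G.n * ((Fintype.card Γ : ℂ) ^ G.n * flowCount Γ S G) := by
        rw [← mul_assoc, ← mul_pow, one_div_mul_cancel card_ne_zero, one_pow, one_mul]
    _ = homFlowTarget Γ S G := by
        rw [flowCount, ← expansion, Finset.mul_sum]
        simp only [homFlowTarget, charWeight, Finset.prod_const, Finset.card_univ,
          Fintype.card_fin]

end FlowCount

/-- Let `Γ` be a finite abelian group and `S ⊆ Γ` closed under inversion. Then the edge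
weights `β_{χ,χ'} = ∑_{s ∈ S} χ(s)⁻¹ χ'(s)` on the character group `Γ*` are real and
symmetric, and the number of `S`-flows of any finite multigraph `G` (with any fixed
orientation) equals `hom(G, H)` for the weighted graph `H` on `Γ*` with node weights
`1/|Γ|` and edge weights `β`. -/
theorem flowCount_eq_hom (Γ : Type) [CommGroup Γ] [Fintype Γ] [Fintype (Γ →* ℂˣ)]
    (S : Finset Γ) (hS : ∀ s ∈ S, s⁻¹ ∈ S) :
    (∀ χ χ' : Γ →* ℂˣ,
      (charWeight Γ S χ χ').im = 0 ∧ charWeight Γ S χ χ' = charWeight Γ S χ' χ) ∧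
    (∀ G : OrientedMultigraph, (flowCount Γ S G : ℂ) = homFlowTarget Γ S G) := by
  refine ⟨fun χ χ' ↦ ⟨?_, charWeight_comm hS χ χ'⟩, flowCount_eq_hom_general S⟩
  rw [← Complex.conj_eq_iff_im, conj_charWeight (fun s _ ↦ isOfFinOrder_of_finite s),
    charWeight_comm hS]
end

section
/- On the class of finite multigraphs in which loops are allowed, define f(G) = 2^{number of loops of G}. Then for every k ≥ 0 the connection matrix M(f,k) is positive semidefinite and has rank 1, yet there is no weighted graph H such that f(G) = hom(G,H) for all G (where loops of G may be mapped onto loops of H, each loop of H carrying a single edge weight). -/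
/-- A finite multigraph in which both parallel edges and loops are allowed:
vertices `Fin n`, edges indexed by `Fin m`, each edge an unordered pair of vertices. -/
structure LoopedMultigraph where
  n : ℕ
  m : ℕ
  ends : Fin m → Sym2 (Fin n)

/-- A weighted graph: finite vertex set, positive real node weights,
real symmetric edge weights (including loop weights `β i i`). -/
structure WeightedGraph where
  d : ℕ
  α : Fin d → ℝ
  β : Fin d → Fin d → ℝ
  α_pos : ∀ i, 0 < α i
  β_symm : ∀ i j, β i j = β j i

/-- The weighted number of homomorphisms `hom(G, H)`; a loop at `u` contributes the
factor `β_H(φ(u), φ(u))`. -/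
noncomputable def homCount (G : LoopedMultigraph) (H : WeightedGraph) : ℝ :=
  ∑ φ : Fin G.n → Fin H.d,
    (∏ u, H.α (φ u)) *
    (∏ e, Sym2.lift ⟨fun u v => H.β (φ u) (φ v), fun u v => H.β_symm (φ u) (φ v)⟩ (G.ends e))

/-- A `k`-labeled looped multigraph: the first `k` vertices are labeled `1, …, k`. -/
structure LGraph (k : ℕ) extends LoopedMultigraph where
  hk : k ≤ n

namespace LGraph

variable {k : ℕ}

/-- Inclusion of the vertices of the first factor into the vertex set of the product. -/
def leftMap (A B : LGraph k) : Fin A.n → Fin (A.n + (B.n - k)) :=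
  fun v => ⟨(v : ℕ), Nat.lt_of_lt_of_le v.isLt (Nat.le_add_right _ _)⟩

/-- Inclusion of the vertices of the second factor into the vertex set of the product. -/
def rightMap (A B : LGraph k) : Fin B.n → Fin (A.n + (B.n - k)) :=
  fun v =>
    if h : (v : ℕ) < k then ⟨(v : ℕ), by have h1 := A.hk; omega⟩
    else ⟨A.n + ((v : ℕ) - k), by have h1 := B.hk; have h2 := v.isLt; omega⟩

/-- The product (gluing) of two `k`-labeled graphs: take the disjoint union and identify
vertices with the same label. -/
def glue (A B : LGraph k) : LGraph k where
  n := A.n + (B.n - k)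
  m := A.m + B.m
  ends := fun e =>
    if h : (e : ℕ) < A.m then
      Sym2.map (leftMap A B) (A.ends ⟨(e : ℕ), h⟩)
    else
      Sym2.map (rightMap A B) (B.ends ⟨(e : ℕ) - A.m, by have := e.isLt; omega⟩)
  hk := Nat.le_trans A.hk (Nat.le_add_right _ _)

end LGraph

/-- The entry of the connection matrix `M(f,k)` in row `A` and column `B`. -/
def connEntry (f : LoopedMultigraph → ℝ) {k : ℕ} (A B : LGraph k) : ℝ :=
  f (LGraph.glue A B).toLoopedMultigraph

/-- The rank of the connection matrix `M(f,k)`. -/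
noncomputable def connRank (f : LoopedMultigraph → ℝ) (k : ℕ) : Cardinal :=
  Module.rank ℝ ↥(Submodule.span ℝ (Set.range (fun A : LGraph k => connEntry f A)))

/-- Positive semidefiniteness of the (infinite) connection matrix `M(f,k)`. -/
def ConnPSD (f : LoopedMultigraph → ℝ) (k : ℕ) : Prop :=
  ∀ x : LGraph k →₀ ℝ,
    0 ≤ ∑ A ∈ x.support, ∑ B ∈ x.support, x A * x B * connEntry f A B

/-- The number of loops of `G`. -/
noncomputable def loopCount (G : LoopedMultigraph) : ℕ :=
  Set.ncard {e : Fin G.m | (G.ends e).IsDiag}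

/-- The graph parameter `f(G) = 2 ^ (number of loops of G)`. -/
noncomputable def twoPowLoops (G : LoopedMultigraph) : ℝ :=
  (2 : ℝ) ^ loopCount G

/-!
Loops add up when graphs are glued along labeled nodes, so `f = 2 ^ #loops` is multiplicative and
each `M(f, k)` is the outer product of a nonzero vector with itself. If `f` were `hom(·, H)`, then
the graphs on two nodes with `0`, `1` and `2` parallel edges would all have value `1`, so the edge
weights of `H`, distributed over pairs of nodes with probabilities `α i * α j`, would have mean `1`
and second moment `1`. Their variance vanishes and, as `α > 0`, all edge weights are `1`, including
those of loops; but then `hom(·, H)` does not see loops.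
-/

theorem rank_span_range_smul {K V ι : Type*} [DivisionRing K] [AddCommGroup V] [Module K V]
    {c : ι → K} {v : V} (hc : c ≠ 0) (hv : v ≠ 0) :
    Module.rank K (Submodule.span K (Set.range fun i => c i • v)) = 1 := by
  obtain ⟨i, hi⟩ := Function.ne_iff.mp hc
  have hspan : Submodule.span K (Set.range fun i => c i • v) = K ∙ v := by
    apply le_antisymm
    · rw [Submodule.span_le]
      rintro _ ⟨j, rfl⟩
      exact Submodule.smul_mem _ _ (Submodule.mem_span_singleton_self v)
    · rw [Submodule.span_singleton_le_iff_mem, ← Submodule.smul_mem_iff _ hi]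
      exact Submodule.subset_span ⟨i, rfl⟩
  rw [hspan, ← Module.finrank_eq_rank, finrank_span_singleton hv, Nat.cast_one]

theorem eq_one_of_sum_mul_eq_of_sum_mul_sq_eq {R ι : Type*} [CommRing R] [LinearOrder R]
    [IsStrictOrderedRing R] {s : Finset ι} {w x : ι → R} (hw : ∀ i ∈ s, 0 < w i)
    (hmean : ∑ i ∈ s, w i * x i = ∑ i ∈ s, w i)
    (hsq : ∑ i ∈ s, w i * x i ^ 2 = ∑ i ∈ s, w i) : ∀ i ∈ s, x i = 1 := by
  have hvar : ∑ i ∈ s, w i * (x i - 1) ^ 2 = 0 :=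
    calc ∑ i ∈ s, w i * (x i - 1) ^ 2
        = ∑ i ∈ s, w i * x i ^ 2 - 2 * ∑ i ∈ s, w i * x i + ∑ i ∈ s, w i := by
          rw [Finset.mul_sum, ← Finset.sum_sub_distrib, ← Finset.sum_add_distrib]
          exact Finset.sum_congr rfl fun i _ => by ring
      _ = 0 := by rw [hmean, hsq]; ring
  rw [Finset.sum_eq_zero_iff_of_nonneg fun i hi => mul_nonneg (hw i hi).le (sq_nonneg _)] at hvar
  intro i hi
  have hdev : (x i - 1) ^ 2 = 0 := (mul_eq_zero.mp (hvar i hi)).resolve_left (hw i hi).ne'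
  exact sub_eq_zero.mp (pow_eq_zero_iff two_ne_zero |>.mp hdev)

namespace LGraph

variable {k : ℕ} (A B : LGraph k)

theorem leftMap_injective : Function.Injective (leftMap A B) :=
  fun _ _ h => Fin.ext (Fin.mk.inj h)

theorem rightMap_injective : Function.Injective (rightMap A B) := by
  intro u v h
  have hA := A.hk
  apply Fin.ext
  unfold rightMap at h
  split_ifs at h <;> simp only [Fin.mk.injEq] at h <;> omega

theorem glue_ends_castAdd (e : Fin A.m) :
    (glue A B).ends (Fin.castAdd B.m e) = (A.ends e).map (leftMap A B) := by
  simp [glue]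

theorem glue_ends_natAdd (e : Fin B.m) :
    (glue A B).ends (Fin.natAdd A.m e) = (B.ends e).map (rightMap A B) := by
  simp [glue]

theorem isDiag_glue_ends_castAdd (e : Fin A.m) :
    ((glue A B).ends (Fin.castAdd B.m e)).IsDiag ↔ (A.ends e).IsDiag :=
  glue_ends_castAdd A B e ▸ Sym2.isDiag_map (leftMap_injective A B)

theorem isDiag_glue_ends_natAdd (e : Fin B.m) :
    ((glue A B).ends (Fin.natAdd A.m e)).IsDiag ↔ (B.ends e).IsDiag :=
  glue_ends_natAdd A B e ▸ Sym2.isDiag_map (rightMap_injective A B)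

/-- The `k`-labeled graph consisting of the labeled nodes only, as an entry where a connection
matrix is visibly nonzero. -/
def edgeless (k : ℕ) : LGraph k := ⟨⟨k, 0, Fin.elim0⟩, le_rfl⟩

end LGraph

section Gluing

variable {k : ℕ}

open scoped Classical in
theorem loopCount_eq_sum (G : LoopedMultigraph) :
    loopCount G = ∑ e, if (G.ends e).IsDiag then 1 else 0 := by
  rw [loopCount, Set.ncard_eq_toFinset_card', Set.toFinset_ofPred, Finset.card_filter]

theorem loopCount_glue (A B : LGraph k) :
    loopCount (A.glue B).toLoopedMultigraph =
      loopCount A.toLoopedMultigraph + loopCount B.toLoopedMultigraph := by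
  simp only [loopCount_eq_sum]
  refine (Fin.sum_univ_add _).trans ?_
  simp only [LGraph.isDiag_glue_ends_castAdd, LGraph.isDiag_glue_ends_natAdd]

/-- Multiplicativity of a graph parameter under gluing of `k`-labeled graphs, i.e. `M(f, k)` is the
outer product of the vector of values of `f` with itself. -/
def GlueMultiplicative (f : LoopedMultigraph → ℝ) (k : ℕ) : Prop :=
  ∀ A B : LGraph k, connEntry f A B = f A.toLoopedMultigraph * f B.toLoopedMultigraph

variable {f : LoopedMultigraph → ℝ}

theorem GlueMultiplicative.connPSD (hf : GlueMultiplicative f k) : ConnPSD f k := by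
  intro x
  calc (0 : ℝ)
      ≤ (∑ A ∈ x.support, x A * f A.toLoopedMultigraph) ^ 2 := sq_nonneg _
    _ = ∑ A ∈ x.support, ∑ B ∈ x.support, x A * x B * connEntry f A B := by
        rw [sq, Finset.sum_mul_sum]
        refine Finset.sum_congr rfl fun A _ => Finset.sum_congr rfl fun B _ => ?_
        rw [hf A B, mul_mul_mul_comm]

theorem GlueMultiplicative.connRank_eq_one (hf : GlueMultiplicative f k) {A : LGraph k}
    (hA : f A.toLoopedMultigraph ≠ 0) : connRank f k = 1 := by
  let v : LGraph k → ℝ := fun B => f B.toLoopedMultigraph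
  have hv : v ≠ 0 := Function.ne_iff.mpr ⟨A, hA⟩
  have hrow : (fun B : LGraph k => connEntry f B) = fun B => v B • v := funext₂ hf
  rw [connRank, hrow, rank_span_range_smul hv hv]

theorem glueMultiplicative_twoPowLoops (k : ℕ) : GlueMultiplicative twoPowLoops k := fun A B => by
  simp only [connEntry, twoPowLoops, loopCount_glue, pow_add]

theorem twoPowLoops_pos (G : LoopedMultigraph) : 0 < twoPowLoops G :=
  pow_pos two_pos _

end Gluing

namespace LoopedMultigraph

/-- The dipole with `m` edges: two nodes joined by `m` parallel edges. Its homomorphism numbers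
are the moments of the edge weights of the target. -/
def dipole (m : ℕ) : LoopedMultigraph := ⟨2, m, fun _ => s(0, 1)⟩

/-- The bouquet of `m` loops at a single node, for testing whether a parameter sees loops. -/
def bouquet (m : ℕ) : LoopedMultigraph := ⟨1, m, fun _ => s(0, 0)⟩

theorem twoPowLoops_dipole (m : ℕ) : twoPowLoops (dipole m) = 1 := by
  simp [twoPowLoops, loopCount, dipole]

theorem twoPowLoops_bouquet (m : ℕ) : twoPowLoops (bouquet m) = 2 ^ m := by
  simp [twoPowLoops, loopCount, bouquet]

end LoopedMultigraph

open LoopedMultigraph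

theorem homCount_dipole (m : ℕ) (H : WeightedGraph) :
    homCount (dipole m) H = ∑ p : Fin H.d × Fin H.d, H.α p.1 * H.α p.2 * H.β p.1 p.2 ^ m := by
  rw [← (finTwoArrowEquiv (Fin H.d)).sum_comp]
  change (∑ φ : Fin 2 → Fin H.d, (∏ u, H.α (φ u)) * ∏ _e : Fin m, H.β (φ 0) (φ 1)) = _
  simp only [Fin.prod_univ_two, Fin.prod_const]
  rfl

theorem WeightedGraph.β_eq_one_of_homCount_dipole {H : WeightedGraph}
    (h₁ : homCount (dipole 1) H = homCount (dipole 0) H)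
    (h₂ : homCount (dipole 2) H = homCount (dipole 0) H) (i j : Fin H.d) : H.β i j = 1 := by
  simp only [homCount_dipole, pow_zero, pow_one, mul_one] at h₁ h₂
  exact eq_one_of_sum_mul_eq_of_sum_mul_sq_eq (x := fun p : Fin H.d × Fin H.d => H.β p.1 p.2)
    (fun p _ => mul_pos (H.α_pos p.1) (H.α_pos p.2)) h₁ h₂ (i, j) (Finset.mem_univ _)

theorem homCount_of_β_eq_one {H : WeightedGraph} (hβ : ∀ i j, H.β i j = 1)
    (G : LoopedMultigraph) : homCount G H = (∑ i, H.α i) ^ G.n := by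
  have hlift (φ : Fin G.n → Fin H.d) (z : Sym2 (Fin G.n)) :
      Sym2.lift ⟨fun u v => H.β (φ u) (φ v), fun u v => H.β_symm (φ u) (φ v)⟩ z = 1 :=
    z.ind fun u v => hβ (φ u) (φ v)
  simp only [homCount, hlift, Finset.prod_const_one, mul_one, Fintype.sum_pow]

theorem twoPowLoops_not_hom :
    ¬ ∃ H : WeightedGraph, ∀ G : LoopedMultigraph, twoPowLoops G = homCount G H := by
  rintro ⟨H, hom_eq⟩
  have hdipole (m : ℕ) : homCount (dipole m) H = 1 := by rw [← hom_eq, twoPowLoops_dipole]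
  have hβ := WeightedGraph.β_eq_one_of_homCount_dipole
    ((hdipole 1).trans (hdipole 0).symm) ((hdipole 2).trans (hdipole 0).symm)
  have hbouquet : twoPowLoops (bouquet 1) = twoPowLoops (bouquet 0) := by
    simp only [hom_eq, homCount_of_β_eq_one hβ, bouquet]
  norm_num [twoPowLoops_bouquet] at hbouquet

/-- On multigraphs with loops allowed, the parameter `f(G) = 2^{#loops}` has positive
semidefinite connection matrices of rank `1` for every `k`, yet it is not the
homomorphism function of any weighted graph. -/
theorem twoPowLoops_psd_rank_one_not_hom :
    (∀ k : ℕ, ConnPSD twoPowLoops k ∧ connRank twoPowLoops k = 1) ∧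
    ¬ ∃ H : WeightedGraph, ∀ G : LoopedMultigraph, twoPowLoops G = homCount G H := by
  refine ⟨fun k => ?_, twoPowLoops_not_hom⟩
  have hmul := glueMultiplicative_twoPowLoops k
  exact ⟨hmul.connPSD, hmul.connRank_eq_one (A := LGraph.edgeless k) (twoPowLoops_pos _).ne'⟩
end

section
/- Let A be a finite-dimensional commutative associative real algebra equipped with a linear functional f: A → ℝ such that ⟨x,y⟩ = f(xy) is a positive definite inner product on A. Then A has a uniquely determined basis {p₁,…,p_r} consisting of nonzero idempotents (p_i² = p_i) that are pairwise annihilating (p_i p_j = 0 for i ≠ j), and if A has a unit u, then u = p₁ + ⋯ + p_r. -/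
/-!
For the inner product `⟨x, y⟩ = f (x * y)` the multiplications `x ↦ a * x` are commuting symmetric
operators, so they have a common eigenbasis. A common eigenvector `v` satisfies `v * v = c • v`
with `c ≠ 0` by positivity, and `c⁻¹ • v` is an idempotent spanning a one-dimensional
ideal. Two distinct idempotents of this kind annihilate each other, and every spanning set of
orthogonal idempotents consists of all of them, whence uniqueness.
-/

/-- A minimal idempotent of a `K`-algebra, understood as a nonzero idempotent `p` whose left
multiples are all scalar multiples of `p`. In the commutative case this says that the ideal
generated by `p` is the line `K ∙ p`. -/
structure IsMinimalIdempotent (K : Type*) {A : Type*} [Semiring K] [NonUnitalNonAssocSemiring A]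
    [Module K A] (p : A) : Prop where
  isIdempotentElem : IsIdempotentElem p
  ne_zero : p ≠ 0
  mul_mem_span : ∀ a : A, a * p ∈ Submodule.span K {p}

/-- A set of nonzero idempotents that pairwise annihilate each other. Mathlib's
`OrthogonalIdempotents` is about families in a unital ring and allows zero members. -/
structure IsOrthogonalIdempotentSet {A : Type*} [NonUnitalNonAssocSemiring A] (S : Set A) :
    Prop where
  isIdempotentElem : ∀ p ∈ S, IsIdempotentElem p
  ne_zero : ∀ p ∈ S, p ≠ 0
  mul_eq_zero : S.Pairwise fun p q ↦ p * q = 0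

namespace IsMinimalIdempotent

variable {K A : Type*} [Field K]

lemma mul_eq_zero_or_mul_eq_self [NonUnitalSemiring A] [Module K A] [SMulCommClass K A A]
    {p q : A} (hp : IsMinimalIdempotent K p) (hq : IsIdempotentElem q) :
    q * p = 0 ∨ q * p = p := by
  obtain ⟨c, hc⟩ := Submodule.mem_span_singleton.mp (hp.mul_mem_span q)
  obtain rfl | hc0 := eq_or_ne c 0
  · exact .inl (by rw [← hc, zero_smul])
  · have h : c • (q * p) = c • p := by rw [← mul_smul_comm, hc, ← mul_assoc, hq.eq]
    exact .inr (smul_right_injective A hc0 h)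

lemma mul_eq_zero [NonUnitalCommSemiring A] [Module K A] [SMulCommClass K A A] {p q : A}
    (hp : IsMinimalIdempotent K p) (hq : IsMinimalIdempotent K q) (hpq : p ≠ q) : p * q = 0 := by
  obtain hqp | hqp := hp.mul_eq_zero_or_mul_eq_self hq.isIdempotentElem
  · rw [mul_comm, hqp]
  · refine (hq.mul_eq_zero_or_mul_eq_self hp.isIdempotentElem).resolve_right fun h ↦ hpq ?_
    rw [← hqp, mul_comm, h]

variable (K A) in
lemma isOrthogonalIdempotentSet_setOf [NonUnitalCommSemiring A] [Module K A]
    [SMulCommClass K A A] : IsOrthogonalIdempotentSet {p : A | IsMinimalIdempotent K p} where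
  isIdempotentElem _ hp := hp.isIdempotentElem
  ne_zero _ hp := hp.ne_zero
  mul_eq_zero _ hp _ hq hpq := hp.mul_eq_zero hq hpq

lemma exists_eq_smul [NonUnitalNonAssocSemiring A] [Module K A] [SMulCommClass K A A]
    [IsScalarTower K A A] {v : A} (hv : v * v ≠ 0) (h : ∀ a, a * v ∈ Submodule.span K {v}) :
    ∃ (c : K) (p : A), IsMinimalIdempotent K p ∧ v = c • p := by
  obtain ⟨c, hc⟩ := Submodule.mem_span_singleton.mp (h v)
  have hc0 : c ≠ 0 := by rintro rfl; exact hv (by rw [← hc, zero_smul])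
  refine ⟨c, c⁻¹ • v, ⟨?_, ?_, fun a ↦ ?_⟩, (smul_inv_smul₀ hc0 v).symm⟩
  · rw [IsIdempotentElem, smul_mul_assoc, mul_smul_comm, ← hc, inv_smul_smul₀ hc0]
  · exact smul_ne_zero (inv_ne_zero hc0) (left_ne_zero_of_mul hv)
  · rw [mul_smul_comm, Submodule.span_singleton_smul_eq (inv_ne_zero hc0).isUnit]
    exact Submodule.smul_mem _ _ (h a)

lemma span_setOf_eq_top [NonUnitalNonAssocRing A] [Module K A] [SMulCommClass K A A]
    [IsScalarTower K A A] (hsq : ∀ x : A, x ≠ 0 → x * x ≠ 0)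
    (hdiag : ⨆ χ : A → K, ⨅ a, Module.End.eigenspace (LinearMap.mulLeft K a) (χ a) = ⊤) :
    Submodule.span K {p : A | IsMinimalIdempotent K p} = ⊤ := by
  rw [eq_top_iff, ← hdiag]
  refine iSup_le fun χ v hv ↦ ?_
  obtain rfl | hv0 := eq_or_ne v 0
  · exact Submodule.zero_mem _
  have hmul (a : A) : a * v = χ a • v :=
    Module.End.mem_eigenspace_iff.mp ((Submodule.mem_iInf _).mp hv a)
  obtain ⟨c, p, hp, rfl⟩ := exists_eq_smul (K := K) (hsq v hv0) fun a ↦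
    Submodule.mem_span_singleton.mpr ⟨χ a, (hmul a).symm⟩
  exact Submodule.smul_mem _ c (Submodule.subset_span hp)

end IsMinimalIdempotent

namespace IsOrthogonalIdempotentSet

variable {K A : Type*}

lemma linearIndepOn [Ring K] [IsDomain K] [NonUnitalNonAssocRing A] [Module K A]
    [Module.IsTorsionFree K A] [IsScalarTower K A A] {S : Set A}
    (hS : IsOrthogonalIdempotentSet S) : LinearIndepOn K id S := by
  refine linearIndependent_iff'.mpr fun s g hg p hp ↦ ?_
  have hgp : g p • (p : A) = 0 := calc
    g p • (p : A) = ∑ q ∈ s, g q • ((q : A) * p) := by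
      rw [Finset.sum_eq_single_of_mem p hp fun q _ hqp ↦ ?_, (hS.isIdempotentElem p p.2).eq]
      rw [hS.mul_eq_zero q.2 p.2 (Subtype.coe_ne_coe.mpr hqp), smul_zero]
    _ = (∑ q ∈ s, g q • (q : A)) * p := by simp only [Finset.sum_mul, smul_mul_assoc]
    _ = 0 := by rw [show ∑ q ∈ s, g q • (q : A) = 0 from hg, zero_mul]
  exact (smul_eq_zero.mp hgp).resolve_right (hS.ne_zero p p.2)

lemma mul_sum [Semiring K] [NonUnitalNonAssocSemiring A] [Module K A] [IsScalarTower K A A]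
    {S : Finset A} (hS : IsOrthogonalIdempotentSet (S : Set A))
    (hspan : Submodule.span K (S : Set A) = ⊤) (a : A) : a * ∑ p ∈ S, p = a := by
  suffices h : LinearMap.mulRight K (∑ p ∈ S, p) = LinearMap.id from LinearMap.congr_fun h a
  refine LinearMap.ext_on hspan fun p hp ↦ ?_
  rw [LinearMap.mulRight_apply, LinearMap.id_apply, Finset.mul_sum,
    Finset.sum_eq_single_of_mem p hp fun q hq hqp ↦ hS.mul_eq_zero hp hq hqp.symm,
    (hS.isIdempotentElem p hp).eq]

lemma isMinimalIdempotent [Semiring K] [NonUnitalNonAssocSemiring A] [Module K A]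
    [IsScalarTower K A A] {S : Set A} (hS : IsOrthogonalIdempotentSet S)
    (hspan : Submodule.span K S = ⊤) {p : A} (hp : p ∈ S) : IsMinimalIdempotent K p := by
  refine ⟨hS.isIdempotentElem p hp, hS.ne_zero p hp, fun a ↦ ?_⟩
  suffices h : Submodule.span K S ≤ (Submodule.span K {p}).comap (LinearMap.mulRight K p) from
    h (hspan ▸ Submodule.mem_top)
  refine Submodule.span_le.mpr fun q hq ↦ ?_
  change q * p ∈ Submodule.span K {p}
  obtain rfl | hqp := eq_or_ne q p
  · rw [(hS.isIdempotentElem q hq).eq]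
    exact Submodule.mem_span_singleton_self q
  · rw [hS.mul_eq_zero hq hp hqp]
    exact Submodule.zero_mem _

lemma eq_setOf_isMinimalIdempotent [Field K] [NonUnitalCommSemiring A] [Module K A]
    [SMulCommClass K A A] [IsScalarTower K A A] {S : Set A} (hS : IsOrthogonalIdempotentSet S)
    (hspan : Submodule.span K S = ⊤) : S = {p | IsMinimalIdempotent K p} := by
  refine Set.Subset.antisymm (fun p hp ↦ hS.isMinimalIdempotent hspan hp) fun p hp ↦ ?_
  by_contra hpS
  have hmul : LinearMap.mulLeft K p = 0 := LinearMap.ext_on hspan fun q hq ↦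
    hp.mul_eq_zero (hS.isMinimalIdempotent hspan hq) (ne_of_mem_of_not_mem hq hpS).symm
  exact hp.ne_zero (hp.isIdempotentElem.eq.symm.trans (LinearMap.congr_fun hmul p))

end IsOrthogonalIdempotentSet

section PositiveDefinite

variable {A : Type*}

/-- The inner product `⟨x, y⟩ = f (x * y)` on a commutative real algebra. -/
abbrev mulInnerProductCore [NonUnitalNonAssocCommRing A] [Module ℝ A] [IsScalarTower ℝ A A]
    (f : A →ₗ[ℝ] ℝ) (hpos : ∀ x : A, x ≠ 0 → 0 < f (x * x)) : InnerProductSpace.Core ℝ A where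
  inner x y := f (x * y)
  conj_inner_symm x y := by simp [mul_comm]
  re_inner_nonneg x := by
    obtain rfl | hx := eq_or_ne x 0
    · simp
    · simpa using (hpos x hx).le
  add_left x y z := by simp [add_mul]
  smul_left x y r := by simp [smul_mul_assoc]
  definite x hx := by
    by_contra hx0
    exact (hpos x hx0).ne' hx

lemma iSup_iInf_eigenspace_mulLeft_eq_top [NonUnitalCommRing A] [Module ℝ A]
    [SMulCommClass ℝ A A] [IsScalarTower ℝ A A] [FiniteDimensional ℝ A]
    (f : A →ₗ[ℝ] ℝ) (hpos : ∀ x : A, x ≠ 0 → 0 < f (x * x)) :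
    ⨆ χ : A → ℝ, ⨅ a, Module.End.eigenspace (LinearMap.mulLeft ℝ a) (χ a) = ⊤ := by
  let core := mulInnerProductCore f hpos
  let : NormedAddCommGroup A := core.toNormedAddCommGroup
  let : InnerProductSpace ℝ A := .ofCore core.toCore
  have hsymm (a : A) : (LinearMap.mulLeft ℝ a).IsSymmetric := fun x y ↦
    congrArg f (show a * x * y = x * (a * y) by rw [mul_comm a x, mul_assoc])
  have hcomm (a b : A) : Commute (LinearMap.mulLeft ℝ a) (LinearMap.mulLeft ℝ b) :=
    LinearMap.ext fun x ↦ mul_left_comm a b x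
  exact LinearMap.IsSymmetric.iSup_iInf_eq_top_of_commute hsymm fun a b _ ↦ hcomm a b

lemma span_setOf_isMinimalIdempotent_eq_top [NonUnitalCommRing A] [Module ℝ A]
    [SMulCommClass ℝ A A] [IsScalarTower ℝ A A] [FiniteDimensional ℝ A]
    (f : A →ₗ[ℝ] ℝ) (hpos : ∀ x : A, x ≠ 0 → 0 < f (x * x)) :
    Submodule.span ℝ {p : A | IsMinimalIdempotent ℝ p} = ⊤ := by
  have hsq (x : A) (hx : x ≠ 0) : x * x ≠ 0 := fun h ↦ by simpa [h] using hpos x hx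
  exact IsMinimalIdempotent.span_setOf_eq_top hsq (iSup_iInf_eigenspace_mulLeft_eq_top f hpos)

end PositiveDefinite

/-- Let `A` be a finite-dimensional commutative associative real algebra (not assumed
unital) equipped with a linear functional `f : A → ℝ` such that `⟨x, y⟩ = f(xy)` is a
positive definite inner product on `A`. Then `A` has a uniquely determined basis
`{p₁, …, p_r}` consisting of nonzero idempotents that pairwise annihilate each other;
moreover, if `A` has a unit `u`, then `u = p₁ + ⋯ + p_r`. -/
theorem exists_unique_idempotent_basis
    (A : Type) [NonUnitalCommRing A] [Module ℝ A]
    [SMulCommClass ℝ A A] [IsScalarTower ℝ A A] [FiniteDimensional ℝ A]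
    (f : A →ₗ[ℝ] ℝ) (hpos : ∀ x : A, x ≠ 0 → 0 < f (x * x)) :
    ∃ P : Finset A,
      ((∀ p ∈ P, p * p = p ∧ p ≠ 0) ∧
        (∀ p ∈ P, ∀ q ∈ P, p ≠ q → p * q = 0) ∧
        LinearIndependent ℝ (Subtype.val : {x // x ∈ P} → A) ∧
        Submodule.span ℝ (P : Set A) = ⊤ ∧
        P.card = Module.finrank ℝ A) ∧
      (∀ P' : Finset A,
        ((∀ p ∈ P', p * p = p ∧ p ≠ 0) ∧
          (∀ p ∈ P', ∀ q ∈ P', p ≠ q → p * q = 0) ∧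
          LinearIndependent ℝ (Subtype.val : {x // x ∈ P'} → A) ∧
          Submodule.span ℝ (P' : Set A) = ⊤ ∧
          P'.card = Module.finrank ℝ A) → P' = P) ∧
      (∀ u : A, (∀ a : A, u * a = a) → ∑ p ∈ P, p = u) := by
  have horth := IsMinimalIdempotent.isOrthogonalIdempotentSet_setOf ℝ A
  obtain ⟨P, hP⟩ := (horth.linearIndepOn (K := ℝ)).setFinite.exists_finset_coe
  rw [← hP] at horth
  have hspan : Submodule.span ℝ (P : Set A) = ⊤ :=
    hP ▸ span_setOf_isMinimalIdempotent_eq_top f hpos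
  have hli : LinearIndepOn ℝ id (P : Set A) := horth.linearIndepOn
  have hcard : P.card = Module.finrank ℝ A := by
    rw [← finrank_span_finset_eq_card hli, hspan, finrank_top]
  refine ⟨P, ⟨fun p hp ↦ ⟨horth.isIdempotentElem p hp, horth.ne_zero p hp⟩,
    fun p hp q hq ↦ horth.mul_eq_zero hp hq, hli, hspan, hcard⟩, ?unique, fun u hu ↦ ?unit⟩
  case unique =>
    rintro P' ⟨hidem, hmul, -, hspan', -⟩
    have horth' : IsOrthogonalIdempotentSet (P' : Set A) :=
      ⟨fun p hp ↦ (hidem p hp).1, fun p hp ↦ (hidem p hp).2, fun p hp q hq ↦ hmul p hp q hq⟩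
    exact Finset.coe_injective ((horth'.eq_setOf_isMinimalIdempotent hspan').trans hP.symm)
  case unit =>
    rw [← hu (∑ p ∈ P, p), horth.mul_sum hspan]
end
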